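/- Let l < k < r be positive integers and p a prime. Let 𝔽_p = K_0 ⊆ K_1 ⊆ … ⊆ K_{k+r−l−2} be a chain of finite fields of characteristic p. Choose elements α_{i,j} for 1 ≤ i ≤ r−l and 1 ≤ j ≤ k such that α_{1,1} = 1, α_{i,j} ∈ K_0 = 𝔽_p when i+j = 2, and α_{i,j} ∈ K_{i+j−2} \ K_{i+j−3} when i+j ≥ 3. Define k vectors v^1, …, v^k ∈ K_{k+r−l−2}^r by v^j_i = δ_{i,j} for i ≤ l and v^j_i = α_{i−l,j} for i ≥ l+1. Then the r×k matrix (v^1,…,v^k) is an (r,k)-MDS code. -/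

import Mathlib

open Matrix

/-- A matrix `M` is an `(m, k)`-MDS code if any `k` of its rows are
linearly independent. -/
def IsMDS {K : Type*} [Field K] {ι ν : Type*} (k : ℕ) (M : Matrix ι ν K) : Prop :=
  ∀ A : Finset ι, A.card = k → LinearIndependent K fun i : {i // i ∈ A} => M i.1

theorem det_mem_subfield {L : Type*} [Field L] (F : Subfield L) {n : ℕ}
    (A : Matrix (Fin n) (Fin n) L) (h : ∀ i j, A i j ∈ F) : A.det ∈ F := by
  rw [Matrix.det_apply']
  refine sum_mem fun σ _ => mul_mem (intCast_mem F _) (prod_mem fun i _ => h _ _)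

theorem det_ne_zero_aux {L : Type*} [Field L] (F : ℕ → Subfield L) (hF : Monotone F)
    (a : ℕ → ℕ → L) (R C : ℕ) (h0 : 0 < R → 0 < C → a 0 0 ≠ 0)
    (hmem : ∀ i j, i < R → j < C → a i j ∈ F (i + j))
    (hnot : ∀ i j, i < R → j < C → 1 ≤ i + j → a i j ∉ F (i + j - 1)) :
    ∀ (n : ℕ) (f g : Fin n → ℕ), StrictMono f → StrictMono g → (∀ i, f i < R) →
      (∀ i, g i < C) → (Matrix.of fun i j => a (f i) (g j)).det ≠ 0 := by
  intro n
  induction n with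
  | zero => intro f g _ _ _ _; simp
  | succ n ih =>
    intro f g hf hg hfR hgC hdet
    have hm := ih (f ∘ Fin.castSucc) (g ∘ Fin.castSucc)
      (hf.comp Fin.strictMono_castSucc) (hg.comp Fin.strictMono_castSucc)
      (fun i => hfR _) (fun i => hgC _)
    by_cases hs : 1 ≤ f (Fin.last n) + g (Fin.last n)
    · have key : ∀ i j, (i ≠ Fin.last n ∨ j ≠ Fin.last n) →
          a (f i) (g j) ∈ F (f (Fin.last n) + g (Fin.last n) - 1) := by
        intro i j hij
        refine hF ?_ (hmem _ _ (hfR i) (hgC j))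
        have h1 : f i ≤ f (Fin.last n) := hf.monotone (Fin.le_last i)
        have h2 : g j ≤ g (Fin.last n) := hg.monotone (Fin.le_last j)
        rcases hij with h | h
        · have := hf (Fin.lt_last_iff_ne_last.2 h)
          omega
        · have := hg (Fin.lt_last_iff_ne_last.2 h)
          omega
      rw [Matrix.det_succ_row _ (Fin.last n), Fin.sum_univ_castSucc] at hdet
      have hsum := sum_mem (t := Finset.univ)
        (S := F (f (Fin.last n) + g (Fin.last n) - 1))
        (f := fun j : Fin n => (-1 : L) ^ ((Fin.last n : ℕ) + (j.castSucc : ℕ)) *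
          (Matrix.of fun i j => a (f i) (g j)) (Fin.last n) j.castSucc *
          ((Matrix.of fun i j => a (f i) (g j)).submatrix (Fin.last n).succAbove
            j.castSucc.succAbove).det) (fun j _ => by
          refine mul_mem (mul_mem (pow_mem (neg_mem (one_mem _)) _) ?_) ?_
          · exact key _ _ (Or.inr (Fin.castSucc_lt_last j).ne)
          · refine det_mem_subfield _ _ fun i j => ?_
            refine key _ _ (Or.inl ?_)
            exact Fin.succAbove_ne _ _)
      have hminor : (Matrix.of fun i j => a ((f ∘ Fin.castSucc) i)
          ((g ∘ Fin.castSucc) j)).det ∈ F (f (Fin.last n) + g (Fin.last n) - 1) :=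
        det_mem_subfield _ _ fun i j => key _ _ (Or.inl (Fin.castSucc_lt_last i).ne)
      have heq : ((Matrix.of fun i j => a (f i) (g j)).submatrix (Fin.last n).succAbove
            (Fin.last n).succAbove) = (Matrix.of fun i j => a ((f ∘ Fin.castSucc) i)
          ((g ∘ Fin.castSucc) j)) := by
        ext i j; simp
      rw [heq] at hdet
      have hsign : (-1 : L) ^ ((Fin.last n : ℕ) + (Fin.last n : ℕ)) = 1 :=
        Even.neg_one_pow ⟨_, rfl⟩
      rw [hsign, one_mul] at hdet
      apply hnot _ _ (hfR (Fin.last n)) (hgC (Fin.last n)) hs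
      have h3 := eq_neg_of_add_eq_zero_right hdet
      have h4 := eq_div_of_mul_eq hm h3
      rw [Matrix.of_apply] at h4
      rw [h4]
      exact div_mem (neg_mem hsum) hminor
    · have hn : n = 0 := by
        by_contra hn
        have : f 0 < f (Fin.last n) := hf (by
          rw [Fin.lt_def]; simp; omega)
        omega
      subst hn
      have e1 : f 0 = 0 := by
        have : (0 : Fin 1) = Fin.last 0 := rfl
        rw [this]; omega
      have e2 : g 0 = 0 := by
        have : (0 : Fin 1) = Fin.last 0 := rfl
        rw [this]; omega
      have h5 := hfR 0
      have h6 := hgC 0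
      rw [e1] at h5
      rw [e2] at h6
      simp [e1, e2] at hdet
      exact h0 h5 h6 hdet

/-- let `l < k < r` be positive integers, `p` prime, and
`𝔽_p = K_0 ⊆ K_1 ⊆ … ⊆ K_{k+r−l−2}` a chain of finite fields of characteristic
`p`. Choose `α_{i,j}` (for `1 ≤ i ≤ r−l`, `1 ≤ j ≤ k`) with `α_{1,1} = 1`,
`α_{i,j} ∈ K_0` when `i+j = 2`, and `α_{i,j} ∈ K_{i+j−2} \ K_{i+j−3}` when
`i+j ≥ 3`. Then the `r×k` matrix `(v^1,…,v^k)` with `v^j_i = δ_{i,j}` for `i ≤ l`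
and `v^j_i = α_{i−l,j}` for `i ≥ l+1` is an `(r,k)`-MDS code.
(Here `α` is indexed `0`-based: `α i j` corresponds to `α_{i+1,j+1}`.) -/
theorem stmt13 {p l k r : ℕ} (hp : p.Prime) (hl : 0 < l) (hlk : l < k) (hkr : k < r)
    {L : Type*} [Field L] [Fintype L] [CharP L p]
    (Ks : Fin (k + r - l - 2 + 1) → Subfield L) (hmono : Monotone Ks)
    (hbot : Ks 0 = ⊥) (htop : Ks (Fin.last _) = ⊤)
    (α : Fin (r - l) → Fin k → L)
    (hα1 : ∀ (i : Fin (r - l)) (j : Fin k), (i : ℕ) = 0 → (j : ℕ) = 0 → α i j = 1)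
    (hα0 : ∀ (i : Fin (r - l)) (j : Fin k), (i : ℕ) + (j : ℕ) = 0 → α i j ∈ Ks 0)
    (hα : ∀ (i : Fin (r - l)) (j : Fin k), 1 ≤ (i : ℕ) + (j : ℕ) →
        α i j ∈ Ks ⟨(i : ℕ) + (j : ℕ), by have := i.isLt; have := j.isLt; omega⟩ ∧
        α i j ∉ Ks ⟨(i : ℕ) + (j : ℕ) - 1, by have := i.isLt; have := j.isLt; omega⟩)
    (M : Matrix (Fin r) (Fin k) L)
    (hM1 : ∀ (i : Fin r) (j : Fin k), (i : ℕ) < l →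
        M i j = if (i : ℕ) = (j : ℕ) then 1 else 0)
    (hM2 : ∀ (i : Fin r) (j : Fin k) (h : l ≤ (i : ℕ)),
        M i j = α ⟨(i : ℕ) - l, by have := i.isLt; omega⟩ j) :
    IsMDS k M := by
  classical
  intro A hA
  set F : ℕ → Subfield L := fun n => Ks ⟨min n (k + r - l - 2), by omega⟩ with hFdef
  have hF : Monotone F := by
    intro x y hxy
    apply hmono
    simp only [Fin.mk_le_mk]
    omega
  set a : ℕ → ℕ → L := fun x y =>
    if h : x < r - l ∧ y < k then α ⟨x, h.1⟩ ⟨y, h.2⟩ else 0 with hadef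
  have hFe : ∀ n (h : n < k + r - l - 2 + 1), F n = Ks ⟨n, h⟩ := by
    intro n h
    simp only [hFdef]
    congr 2
    omega
  have ha : ∀ (i : Fin (r - l)) (j : Fin k), a i j = α i j := by
    intro i j
    simp [hadef]
  have hdet := det_ne_zero_aux F hF a (r - l) k
    (by
      intro h1 h2
      have := ha ⟨0, h1⟩ ⟨0, h2⟩
      rw [hα1 _ _ rfl rfl] at this
      simp only at this
      rw [this]; exact one_ne_zero)
    (by
      intro i j hi hj
      have h1 := ha ⟨i, hi⟩ ⟨j, hj⟩
      simp only at h1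
      rw [h1, hFe (i + j) (by omega)]
      by_cases hs : 1 ≤ i + j
      · exact (hα ⟨i, hi⟩ ⟨j, hj⟩ hs).1
      · have hij : i + j = 0 := by omega
        have h2 := hα0 ⟨i, hi⟩ ⟨j, hj⟩ hij
        convert h2 using 2
        simp [hij])
    (by
      intro i j hi hj hs
      have h1 := ha ⟨i, hi⟩ ⟨j, hj⟩
      simp only at h1
      rw [h1, hFe (i + j - 1) (by omega)]
      exact (hα ⟨i, hi⟩ ⟨j, hj⟩ hs).2)
  have main : LinearIndepOn L (fun i => M i) (A : Set (Fin r)) := by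
    rw [linearIndepOn_finset_iff]
    intro c hc
    have hcol : ∀ j, ∑ i ∈ A, c i * M i j = 0 := by
      intro j
      have := congrFun hc j
      simpa [Finset.sum_apply] using this
    set S := A.filter (fun i : Fin r => (i : ℕ) < l) with hS
    set T := A.filter (fun i : Fin r => ¬ (i : ℕ) < l) with hT
    have hST : S.card + T.card = k := by
      rw [← hA]; exact Finset.card_filter_add_card_filter_not (s := A) (fun i : Fin r => (i : ℕ) < l)
    have hSl : ∀ i : Fin r, i ∈ S → (i : ℕ) < l := fun i hi => (Finset.mem_filter.1 hi).2
    set S' : Finset (Fin k) := S.attach.image (fun i => ⟨(i.1 : ℕ),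
      lt_trans (hSl i.1 i.2) hlk⟩) with hS'
    have hS'c : S'.card = S.card := by
      rw [hS', Finset.card_image_of_injective, Finset.card_attach]
      intro x y hxy
      simp only [Fin.mk.injEq] at hxy
      exact Subtype.ext (Fin.ext hxy)
    have hU : S'ᶜ.card = T.card := by
      rw [Finset.card_compl, Fintype.card_fin, hS'c]; omega
    have hmemS' : ∀ (i : Fin r) (j : Fin k), i ∈ S → (i : ℕ) = j → j ∈ S' := by
      intro i j hi hij
      rw [hS', Finset.mem_image]
      exact ⟨⟨i, hi⟩, Finset.mem_attach _ _, Fin.ext hij⟩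
    let f := T.orderEmbOfFin rfl
    let g := S'ᶜ.orderEmbOfFin hU
    have hfT : ∀ x, f x ∈ T := fun x => Finset.orderEmbOfFin_mem _ _ _
    have hfl : ∀ x, l ≤ (f x : ℕ) := fun x => not_lt.1 (Finset.mem_filter.1 (hfT x)).2
    have hgU : ∀ x, g x ∉ S' := fun x =>
      Finset.mem_compl.1 (Finset.orderEmbOfFin_mem _ hU x)
    have hd := hdet T.card (fun x => (f x : ℕ) - l) (fun x => (g x : ℕ))
      (by
        intro x y hxy
        have h1 : (f x : ℕ) < f y := f.strictMono hxy
        have := hfl x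
        simp only
        omega)
      (by
        intro x y hxy
        exact g.strictMono hxy)
      (by
        intro x
        have h1 := hfl x
        have h2 := (f x).isLt
        omega)
      (fun x => (g x).isLt)
    have hcT0 : (fun x => c (f x)) = 0 := by
      apply Matrix.eq_zero_of_vecMul_eq_zero hd
      ext y
      have h1 := hcol (g y)
      rw [← Finset.sum_filter_add_sum_filter_not A (fun i : Fin r => (i : ℕ) < l)] at h1
      rw [Finset.sum_eq_zero, zero_add] at h1
      · rw [Pi.zero_apply, ← h1]
        have h2 : T = Finset.univ.map f.toEmbedding :=
          (Finset.map_orderEmbOfFin_univ T rfl).symm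
        change _ = ∑ x ∈ T, c x * M x (g y)
        have h5 : ∑ x ∈ T, c x * M x (g y) = ∑ x, c (f x) * M (f x) (g y) :=
          (Finset.sum_congr h2 fun _ _ => rfl).trans (Finset.sum_map _ _ _)
        rw [h5]
        simp only [Matrix.vecMul, dotProduct, Matrix.of_apply]
        refine Finset.sum_congr rfl fun x _ => ?_
        have h3 := hM2 (f x) (g y) (hfl x)
        have h4 := ha ⟨(f x : ℕ) - l, by have := (f x).isLt; have := hfl x; omega⟩ (g y)
        simp only at h4
        rw [h4, ← h3]
      · intro i hi
        rw [hM1 _ _ (Finset.mem_filter.1 hi).2, if_neg, mul_zero]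
        intro hij
        exact hgU y (hmemS' i _ hi hij)
    have hcT : ∀ i ∈ T, c i = 0 := by
      intro i hi
      have h1 : i ∈ Finset.univ.map f.toEmbedding := by
        rw [Finset.map_orderEmbOfFin_univ T rfl]; exact hi
      obtain ⟨x, _, rfl⟩ := Finset.mem_map.1 h1
      exact congrFun hcT0 x
    intro i hi
    by_cases hil : (i : ℕ) < l
    · have h1 := hcol ⟨i, lt_trans hil hlk⟩
      rw [Finset.sum_eq_single_of_mem i hi] at h1
      · rw [hM1 _ _ hil] at h1
        simpa using h1
      · intro b hb hbi
        by_cases hbl : (b : ℕ) < l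
        · rw [hM1 _ _ hbl, if_neg, mul_zero]
          intro h; exact hbi (Fin.ext h)
        · rw [hcT b (Finset.mem_filter.2 ⟨hb, hbl⟩), zero_mul]
    · exact hcT i (Finset.mem_filter.2 ⟨hi, hil⟩)
  exact main
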